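/- arXiv:2002.10704 — 5 statements merged into one kernel-verified Lean document; each statement's English description precedes it below -/
import Mathlib

section
/- Let f = (f_1,…,f_n) be normalized monotone valuations on a finite item set M and let A be a Lorenz dominating allocation for f. Then: (i) A maximizes the welfare Σ_i f_i(A_i) over all allocations; (ii) A is lex-min, i.e., its sorted utility vector is maximal among all allocations in the lexicographic order that compares entries from smallest to largest; (iii) among all welfare-maximizing allocations, A minimizes Σ_i (f_i(A_i))²; and (iv) A maximizes the Nash social welfare Π_i f_i(A_i) over all allocations. -/
open Finset
open scoped Classical

variable {n : ℕ} {I : Type*} [DecidableEq I] [Fintype I]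

/-- An allocation assigns pairwise disjoint bundles of items to the agents
(items may remain unallocated). -/
def IsAllocation (A : Fin n → Finset I) : Prop :=
  ∀ i j : Fin n, i ≠ j → Disjoint (A i) (A j)

/-- The vector of utilities of an allocation under a profile of valuations. -/
def util {α : Type*} (f : Fin n → Finset I → α) (A : Fin n → Finset I) : Fin n → α :=
  fun i => f i (A i)

/-- The entries of the vector `u`, sorted in nondecreasing order. -/
noncomputable def sortedVec {α : Type*} [LinearOrder α] (u : Fin n → α) : List α :=
  (Finset.univ.val.map u).sort (· ≤ ·)

/-- `u` Lorenz-dominates `v`: for each `k`, the sum of the `k` smallest entries of `u`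
is at least the sum of the `k` smallest entries of `v`. -/
def LorenzGE {α : Type*} [LinearOrder α] [AddCommMonoid α] (u v : Fin n → α) : Prop :=
  ∀ k : ℕ, ((sortedVec v).take k).sum ≤ ((sortedVec u).take k).sum

/-- A matroid rank function: a normalized submodular valuation with dichotomous marginals. -/
structure IsMRF (f : Finset I → ℕ) : Prop where
  empty : f ∅ = 0
  submod : ∀ S T : Finset I, S ⊆ T → ∀ a : I,
      f (insert a T) + f S ≤ f (insert a S) + f T
  dichot : ∀ (S : Finset I) (a : I), f (insert a S) = f S ∨ f (insert a S) = f S + 1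

/-- Non-redundancy: removing any item from any agent's bundle strictly decreases its value. -/
def NonRedundant (f : Fin n → Finset I → ℕ) (A : Fin n → Finset I) : Prop :=
  ∀ i : Fin n, ∀ a ∈ A i, f i ((A i).erase a) < f i (A i)

/-- A Lorenz dominating allocation. -/
def LorenzDominating (f : Fin n → Finset I → ℕ) (A : Fin n → Finset I) : Prop :=
  ∀ B : Fin n → Finset I, IsAllocation B → LorenzGE (util f A) (util f B)

/-- The σ-perturbed utilities: agent `i` gets `f i (A i) + σ(i)/n²`, where the priority
`σ(i)` ranges over `{1,…,n}`. -/
noncomputable def pUtil (σ : Equiv.Perm (Fin n)) (f : Fin n → Finset I → ℕ)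
    (A : Fin n → Finset I) : Fin n → ℝ :=
  fun i => (f i (A i) : ℝ) + (((σ i : ℕ) : ℝ) + 1) / (n : ℝ) ^ 2

/-- A σ-Lorenz dominating allocation. -/
def SigmaLorenzDom (σ : Equiv.Perm (Fin n)) (f : Fin n → Finset I → ℕ)
    (A : Fin n → Finset I) : Prop :=
  ∀ B : Fin n → Finset I, IsAllocation B → LorenzGE (pUtil σ f A) (pUtil σ f B)

/-- Restriction of a valuation to a subset `D` of the items. -/
def restrictVal (f : Finset I → ℕ) (D : Finset I) : Finset I → ℕ := fun S => f (S ∩ D)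

/-- A partition of all the items into `n` (possibly empty) bundles. -/
def IsPartition (P : Fin n → Finset I) : Prop :=
  (∀ i j : Fin n, i ≠ j → Disjoint (P i) (P j)) ∧ ∀ a : I, ∃ j, a ∈ P j

/-- An XOS valuation: the pointwise maximum of a finite nonempty family of
nonnegative additive valuations. -/
def IsXOS (f : Finset I → ℝ) : Prop :=
  ∃ (k : ℕ) (w : Fin (k + 1) → I → ℝ),
    (∀ t a, 0 ≤ w t a) ∧
    ∀ S : Finset I, f S = Finset.univ.sup' Finset.univ_nonempty (fun t => ∑ a ∈ S, w t a)

/-- A dichotomous valuation (real-valued version). -/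
def IsDichotomousR (f : Finset I → ℝ) : Prop :=
  ∀ (S : Finset I) (a : I), f (insert a S) = f S ∨ f (insert a S) = f S + 1

/-- Envy-freeness up to one good. -/
def EF1 (f : Fin n → Finset I → ℝ) (A : Fin n → Finset I) : Prop :=
  ∀ i j : Fin n, f i (A j) ≤ f i (A i) ∨ ∃ e ∈ A j, f i ((A j).erase e) ≤ f i (A i)

/-- The maximum welfare attainable by a set `S` of agents. -/
noncomputable def maxWelfare (f : Fin n → Finset I → ℕ) (S : Finset (Fin n)) : ℕ :=
  Finset.sup (Finset.univ.filter fun B : Fin n → Finset I => IsAllocation B)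
    (fun B => ∑ j ∈ S, f j (B j))

/-- An allocation extended with index `none` for the set of unallocated items. -/
def extAlloc (A : Fin n → Finset I) : Option (Fin n) → Finset I
  | none => Finset.univ \ Finset.univ.biUnion A
  | some i => A i

/-- The sorted vector of `u` lists the values of `u` along its sorting permutation. -/
theorem sortedVec_eq_ofFn {α : Type*} [LinearOrder α] (u : Fin n → α) :
    sortedVec u = List.ofFn (u ∘ Tuple.sort u) := by
  have hperm : (List.ofFn (u ∘ Tuple.sort u)).Perm (List.ofFn u) :=
    Equiv.Perm.ofFn_comp_perm _ _
  have hcoe : Finset.univ.val.map u = (List.ofFn u : Multiset α) := by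
    simp [Fin.univ_def, List.ofFn_eq_map]
  refine List.Perm.eq_of_pairwise' (r := (· ≤ ·)) (Multiset.pairwise_sort _ _)
    (Tuple.monotone_sort u).sortedLE_ofFn.pairwise ?_
  rw [← Multiset.coe_eq_coe, Multiset.coe_eq_coe.2 hperm, ← hcoe]
  exact Multiset.sort_eq _ _

/-- **Abel's inequality**: weighting by an antitone sequence a vector whose proper prefix sums
are nonnegative gives at least the smallest weight times the total sum. -/
theorem Fin.mul_sum_le_sum_mul_of_antitone {m : ℕ} (c d : Fin (m + 1) → ℝ) (hc : Antitone c)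
    (hd : ∀ k ≤ m, 0 ≤ ∑ j with j.val < k, d j) :
    c (Fin.last m) * ∑ j, d j ≤ ∑ j, c j * d j := by
  induction m with
  | zero => simp
  | succ m ih =>
    have hprefix : ∀ k ≤ m + 1, 0 ≤ ∑ j : Fin (m + 1) with j.val < k, d j.castSucc := by
      intro k hk
      have h := hd k hk
      rw [Finset.sum_filter, Fin.sum_univ_castSucc] at h
      rw [Finset.sum_filter]
      simpa [hk.not_gt] using h
    have hinit := ih (fun j => c j.castSucc) (fun j => d j.castSucc)
      (fun i j hij => hc (Fin.castSucc_le_castSucc_iff.2 hij))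
      (fun k hk => hprefix k (hk.trans m.le_succ))
    have htotal : 0 ≤ ∑ j : Fin (m + 1), d j.castSucc := by
      simpa only [Fin.is_lt, Finset.filter_true] using hprefix (m + 1) le_rfl
    have hlast : c (Fin.last (m + 1)) ≤ c (Fin.last m).castSucc := hc (Fin.le_last _)
    rw [Fin.sum_univ_castSucc, Fin.sum_univ_castSucc (fun j => c j * d j)]
    nlinarith [mul_le_mul_of_nonneg_right hlast htotal]

/-- Dominating all prefix sums implies lexicographic domination. -/
theorem List.eq_or_lex_of_sum_take_le {a b : List ℝ} (hlen : b.length = a.length)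
    (h : ∀ k : ℕ, (b.take k).sum ≤ (a.take k).sum) : b = a ∨ List.Lex (· < ·) b a := by
  induction b generalizing a with
  | nil => exact Or.inl (List.length_eq_zero_iff.1 hlen.symm).symm
  | cons y b ih =>
    cases a with
    | nil => simp at hlen
    | cons x a =>
      have hhead : y ≤ x := by simpa using h 1
      rcases hhead.lt_or_eq with hlt | rfl
      · exact Or.inr (List.Lex.rel hlt)
      · rcases ih (by simpa using hlen) (fun k => by simpa using h (k + 1)) with rfl | hlex
        · exact Or.inl rfl
        · exact Or.inr (List.Lex.cons hlex)

namespace LorenzGE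

variable {u v : Fin n → ℝ}

/-- Lorenz domination in terms of the vectors rearranged in nondecreasing order. -/
theorem sum_sort_le (h : LorenzGE u v) (k : ℕ) :
    ∑ j with j.val < k, v (Tuple.sort v j) ≤ ∑ j with j.val < k, u (Tuple.sort u j) := by
  simpa [sortedVec_eq_ofFn, List.sum_take_ofFn] using h k

theorem sum_le (h : LorenzGE u v) : ∑ i, v i ≤ ∑ i, u i := by
  have hn := h.sum_sort_le n
  simp only [Fin.is_lt, Finset.filter_true] at hn
  rwa [Equiv.sum_comp, Equiv.sum_comp] at hn

theorem sortedVec_eq_or_lex (h : LorenzGE u v) :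
    sortedVec v = sortedVec u ∨ List.Lex (· < ·) (sortedVec v) (sortedVec u) :=
  List.eq_or_lex_of_sum_take_le (by simp [sortedVec_eq_ofFn]) h

theorem sum_sq_le (h : LorenzGE u v) (hsum : ∑ i, u i = ∑ i, v i) :
    ∑ i, u i ^ 2 ≤ ∑ i, v i ^ 2 := by
  cases n with
  | zero => simp
  | succ m =>
    have habel := Fin.mul_sum_le_sum_mul_of_antitone (fun j => -(2 * u (Tuple.sort u j)))
      (fun j => u (Tuple.sort u j) - v (Tuple.sort v j))
      (fun i j hij => neg_le_neg (mul_le_mul_of_nonneg_left (Tuple.monotone_sort u hij)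
        zero_le_two))
      (fun k _ => by simpa using h.sum_sort_le k)
    rw [Finset.sum_sub_distrib, Equiv.sum_comp, Equiv.sum_comp, hsum, sub_self, mul_zero]
      at habel
    rw [← Equiv.sum_comp (Tuple.sort u) (fun i => u i ^ 2),
      ← Equiv.sum_comp (Tuple.sort v) (fun i => v i ^ 2), ← sub_nonneg,
      ← Finset.sum_sub_distrib]
    refine habel.trans (Finset.sum_le_sum fun j _ => ?_)
    nlinarith [sq_nonneg (u (Tuple.sort u j) - v (Tuple.sort v j))]

/-- A vector that Lorenz-dominates a positive vector is positive. -/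
theorem pos (h : LorenzGE u v) (hv : ∀ i, 0 < v i) (i : Fin n) : 0 < u i := by
  cases n with
  | zero => exact i.elim0
  | succ m =>
    have hmin : v (Tuple.sort v 0) ≤ u (Tuple.sort u 0) := by
      simpa [Finset.sum_filter, Fin.sum_univ_succ] using h.sum_sort_le 1
    have hle : u (Tuple.sort u 0) ≤ u i := by
      simpa using Tuple.monotone_sort u (Fin.zero_le ((Tuple.sort u).symm i))
    exact (hv _).trans_le (hmin.trans hle)

theorem prod_le_of_pos (h : LorenzGE u v) (hv : ∀ i, 0 < v i) : ∏ i, v i ≤ ∏ i, u i := by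
  cases n with
  | zero => simp
  | succ m =>
    have hu := h.pos hv
    have habel := Fin.mul_sum_le_sum_mul_of_antitone (fun j => (u (Tuple.sort u j))⁻¹)
      (fun j => u (Tuple.sort u j) - v (Tuple.sort v j))
      (fun i j hij => inv_anti₀ (hu _) (Tuple.monotone_sort u hij))
      (fun k _ => by simpa using h.sum_sort_le k)
    rw [Finset.sum_sub_distrib, Equiv.sum_comp, Equiv.sum_comp] at habel
    have hweighted := (mul_nonneg (inv_nonneg.2 (hu _).le) (sub_nonneg.2 h.sum_le)).trans habel
    rw [← Real.log_le_log_iff (Finset.prod_pos fun i _ => hv i)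
        (Finset.prod_pos fun i _ => hu i),
      Real.log_prod fun i _ => (hv i).ne', Real.log_prod fun i _ => (hu i).ne',
      ← Equiv.sum_comp (Tuple.sort u) (fun i => Real.log (u i)),
      ← Equiv.sum_comp (Tuple.sort v) (fun i => Real.log (v i)), ← sub_nonneg,
      ← Finset.sum_sub_distrib]
    refine hweighted.trans (Finset.sum_le_sum fun j _ => ?_)
    have hx := hu (Tuple.sort u j)
    have hy := hv (Tuple.sort v j)
    have hlog := Real.log_le_sub_one_of_pos (div_pos hy hx)
    rw [Real.log_div hy.ne' hx.ne'] at hlog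
    rw [mul_sub, inv_mul_cancel₀ hx.ne', inv_mul_eq_div]
    linarith

theorem prod_le (h : LorenzGE u v) (hu : ∀ i, 0 ≤ u i) (hv : ∀ i, 0 ≤ v i) :
    ∏ i, v i ≤ ∏ i, u i := by
  by_cases hzero : ∃ i, v i = 0
  · obtain ⟨i, hi⟩ := hzero
    rw [Finset.prod_eq_zero (Finset.mem_univ i) hi]
    exact Finset.prod_nonneg fun i _ => hu i
  · push Not at hzero
    exact h.prod_le_of_pos fun i => (hv i).lt_of_ne' (hzero i)

end LorenzGE

/-- Proposition: a Lorenz dominating allocation for normalized monotone valuations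
maximizes welfare, is lex-min, is min-square, and maximizes Nash social welfare. -/
theorem lorenz_dominating_is_good
    {n : ℕ} {I : Type*} [DecidableEq I] [Fintype I]
    (f : Fin n → Finset I → ℝ)
    (hnorm : ∀ i, f i ∅ = 0)
    (hmono : ∀ i, ∀ S T : Finset I, S ⊆ T → f i S ≤ f i T)
    (A : Fin n → Finset I) (hA : IsAllocation A)
    (hLD : ∀ B : Fin n → Finset I, IsAllocation B → LorenzGE (util f A) (util f B)) :
    -- (i) A maximizes welfare
    (∀ B : Fin n → Finset I, IsAllocation B → ∑ i, f i (B i) ≤ ∑ i, f i (A i)) ∧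
    -- (ii) A is lex-min: its sorted utility vector is lexicographically maximal
    (∀ B : Fin n → Finset I, IsAllocation B →
      sortedVec (util f B) = sortedVec (util f A) ∨
      List.Lex (· < ·) (sortedVec (util f B)) (sortedVec (util f A))) ∧
    -- (iii) among welfare-maximizing allocations, A minimizes the sum of squared utilities
    (∀ B : Fin n → Finset I, IsAllocation B →
      (∀ C : Fin n → Finset I, IsAllocation C → ∑ i, f i (C i) ≤ ∑ i, f i (B i)) →
      ∑ i, (f i (A i)) ^ 2 ≤ ∑ i, (f i (B i)) ^ 2) ∧
    -- (iv) A maximizes Nash social welfare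
    (∀ B : Fin n → Finset I, IsAllocation B → ∏ i, f i (B i) ≤ ∏ i, f i (A i)) := by
  have hnonneg : ∀ (C : Fin n → Finset I) i, 0 ≤ f i (C i) := fun C i =>
    (hnorm i).symm.trans_le (hmono i ∅ (C i) (Finset.empty_subset _))
  exact ⟨fun B hB => (hLD B hB).sum_le, fun B hB => (hLD B hB).sortedVec_eq_or_lex,
    fun B hB hmax => (hLD B hB).sum_sq_le ((hmax A hA).antisymm (hLD B hB).sum_le),
    fun B hB => (hLD B hB).prod_le (hnonneg A) (hnonneg B)⟩
end

section
/- Let f_1,…,f_n be MRF (submodular dichotomous) valuations on a finite item set M and let A be a non-redundant Lorenz dominating allocation. Then A is EFX: for all agents i, j and every item e ∈ A_j, f_i(A_i) ≥ f_i(A_j \ {e}). -/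
open Finset
open scoped Classical

variable {n : ℕ} {I : Type*} [DecidableEq I] [Fintype I]

/-- Truncating the entries of a list at `t` gives at most the sum of the first `k` entries
plus `t` for each of the remaining ones. -/
theorem List.sum_map_min_le_sum_take (t : ℕ) (l : List ℕ) (k : ℕ) :
    (l.map (min t)).sum ≤ (l.take k).sum + (l.length - k) * t := by
  induction l generalizing k with
  | nil => simp
  | cons a l ih =>
    cases k with
    | zero =>
      have h := ih 0
      have h₁ : min t a ≤ t := min_le_left t a
      simp only [List.take_zero, List.sum_nil, tsub_zero, zero_add, List.map_cons,
        List.sum_cons, List.length_cons, Nat.succ_mul] at h ⊢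
      omega
    | succ k =>
      have h := ih k
      have h₁ : min t a ≤ a := min_le_right t a
      simp only [List.map_cons, List.sum_cons, List.length_cons, List.take_succ_cons,
        Nat.add_sub_add_right] at h ⊢
      omega

/-- For a sorted list, the bound of `List.sum_map_min_le_sum_take` is attained. -/
theorem List.exists_sum_map_min_eq_sum_take (t : ℕ) (l : List ℕ) (hl : l.Pairwise (· ≤ ·)) :
    ∃ k, (l.map (min t)).sum = (l.take k).sum + (l.length - k) * t := by
  induction l with
  | nil => exact ⟨0, by simp⟩
  | cons a l ih =>
    obtain ⟨hal, hl⟩ := List.pairwise_cons.1 hl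
    by_cases hat : a ≤ t
    · obtain ⟨k, hk⟩ := ih hl
      exact ⟨k + 1, by simp [hk, hat, add_assoc]⟩
    · have hmin : ∀ b ∈ a :: l, min t b = t := by
        intro b hb
        rcases List.mem_cons.1 hb with rfl | hb
        · omega
        · have := hal b hb
          omega
      refine ⟨0, ?_⟩
      rw [List.map_congr_left hmin]
      simp [Nat.succ_mul, add_comm]

theorem length_sortedVec {n : ℕ} (u : Fin n → ℕ) : (sortedVec u).length = n := by
  simp [sortedVec]

theorem sum_map_sortedVec {n : ℕ} (u : Fin n → ℕ) (g : ℕ → ℕ) :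
    ((sortedVec u).map g).sum = ∑ i, g (u i) := by
  rw [← Multiset.sum_coe, ← Multiset.map_coe, sortedVec, Multiset.sort_eq, Multiset.map_map]
  rfl

/-- Lorenz dominance implies dominance of the sums of the entries truncated at any level. -/
theorem LorenzGE.sum_min_le {n : ℕ} {u v : Fin n → ℕ} (h : LorenzGE u v) (t : ℕ) :
    ∑ i, min t (v i) ≤ ∑ i, min t (u i) := by
  obtain ⟨k, hk⟩ := List.exists_sum_map_min_eq_sum_take t (sortedVec u)
    (Multiset.pairwise_sort _ _)
  have hv := List.sum_map_min_le_sum_take t (sortedVec v) k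
  rw [sum_map_sortedVec, length_sortedVec] at hk hv
  have := h k
  omega

namespace IsMRF

variable {J : Type*} [DecidableEq J] {f : Finset J → ℕ}

theorem le_insert (hf : IsMRF f) (S : Finset J) (a : J) : f S ≤ f (insert a S) := by
  rcases hf.dichot S a with h | h <;> omega

theorem le_union (hf : IsMRF f) (S T : Finset J) : f T ≤ f (S ∪ T) := by
  induction S using Finset.induction_on with
  | empty => simp
  | insert a S _ ih =>
    rw [Finset.insert_union]
    exact ih.trans (hf.le_insert _ a)

theorem le_card (hf : IsMRF f) (S : Finset J) : f S ≤ S.card := by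
  induction S using Finset.induction_on with
  | empty => simp [hf.empty]
  | insert a S ha ih =>
    rw [Finset.card_insert_of_notMem ha]
    rcases hf.dichot S a with h | h <;> omega

theorem le_erase_add_one (hf : IsMRF f) {S : Finset J} {a : J} (ha : a ∈ S) :
    f S ≤ f (S.erase a) + 1 := by
  have h := hf.dichot (S.erase a) a
  rw [Finset.insert_erase ha] at h
  omega

/-- A set none of whose elements increases the value of `S` does not increase it as a whole. -/
theorem union_eq_of_forall_insert_eq (hf : IsMRF f) (S T : Finset J)
    (h : ∀ a ∈ T, f (insert a S) = f S) : f (T ∪ S) = f S := by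
  induction T using Finset.induction_on with
  | empty => simp
  | insert a T _ ih =>
    have ih := ih fun b hb => h b (Finset.mem_insert_of_mem hb)
    have ha := h a (Finset.mem_insert_self a T)
    have hs := hf.submod S (T ∪ S) Finset.subset_union_right a
    have hm := hf.le_insert (T ∪ S) a
    rw [Finset.insert_union]
    omega

/-- Augmentation: a set of larger value contains an element that increases the value of `S`. -/
theorem exists_insert_eq_add_one (hf : IsMRF f) {S T : Finset J} (h : f S < f T) :
    ∃ a ∈ T, f (insert a S) = f S + 1 := by
  by_contra! hne
  have hu := hf.union_eq_of_forall_insert_eq S T fun a ha =>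
    (hf.dichot S a).resolve_right (hne a ha)
  have := hf.le_union S T
  rw [Finset.union_comm] at this
  omega

/-- A set all of whose elements are critical for its value has value equal to its size. -/
theorem eq_card_of_forall_erase_lt (hf : IsMRF f) {S : Finset J}
    (h : ∀ a ∈ S, f (S.erase a) < f S) : f S = S.card := by
  refine le_antisymm (hf.le_card S) ?_
  suffices ∀ T ⊆ S, T.card ≤ f T from this S subset_rfl
  intro T
  induction T using Finset.induction_on with
  | empty => simp
  | insert a T ha ih =>
    intro hT
    have haS := hT (Finset.mem_insert_self a T)
    have hTS : T ⊆ S.erase a := fun b hb =>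
      Finset.mem_erase.2 ⟨fun hba => ha (hba ▸ hb), hT (Finset.mem_insert_of_mem hb)⟩
    have hs := hf.submod T (S.erase a) hTS a
    rw [Finset.insert_erase haS] at hs
    have := h a haS
    have := ih ((Finset.subset_insert a T).trans hT)
    rw [Finset.card_insert_of_notMem ha]
    omega

end IsMRF

/-- The allocation obtained from `A` by moving item `a` from agent `j` to agent `i`. -/
def transfer {n : ℕ} {J : Type*} [DecidableEq J] (A : Fin n → Finset J) (i j : Fin n) (a : J) :
    Fin n → Finset J :=
  Function.update (Function.update A j ((A j).erase a)) i (insert a (A i))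

theorem IsAllocation.transfer {n : ℕ} {J : Type*} [DecidableEq J] {A : Fin n → Finset J}
    (hA : IsAllocation A) {i j : Fin n} {a : J} (ha : a ∈ A j) :
    IsAllocation (transfer A i j a) := by
  have hnot : ∀ k, k ≠ j → a ∉ A k := fun k hk hak =>
    Finset.disjoint_left.1 (hA k j hk) hak ha
  intro k l hkl
  have hd := Finset.disjoint_left.1 (hA k l hkl)
  rw [Finset.disjoint_left]
  intro b
  simp only [_root_.transfer, Function.update_apply]
  grind

/-- A non-redundant Lorenz dominating allocation for MRF (submodular dichotomous)
valuations is EFX. -/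
theorem lorenz_dominating_nonredundant_is_EFX
    {n : ℕ} {I : Type*} [DecidableEq I] [Fintype I]
    (f : Fin n → Finset I → ℕ) (hf : ∀ i, IsMRF (f i))
    (A : Fin n → Finset I) (hA : IsAllocation A)
    (hNR : NonRedundant f A)
    (hLD : LorenzDominating f A) :
    ∀ i j : Fin n, ∀ e ∈ A j, f i ((A j).erase e) ≤ f i (A i) := by
  intro i j e he
  by_contra! hlt
  obtain ⟨a, ha, hia⟩ := (hf i).exists_insert_eq_add_one hlt
  have haj : a ∈ A j := Finset.mem_of_mem_erase ha
  have hij : i ≠ j := by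
    rintro rfl
    rw [Finset.insert_eq_self.2 haj] at hia
    omega
  have hsize : f i (A i) + 2 ≤ f j (A j) := by
    have hc := (hf i).le_card ((A j).erase e)
    rw [Finset.card_erase_of_mem he] at hc
    rw [(hf j).eq_card_of_forall_erase_lt (hNR j)]
    omega
  have hja := (hf j).le_erase_add_one haj
  have hsum := (hLD _ (hA.transfer (i := i) haj)).sum_min_le (f i (A i) + 1)
  refine hsum.not_gt (Finset.sum_lt_sum (fun k _ => ?_) ⟨i, Finset.mem_univ i, ?_⟩)
  · by_cases hki : k = i
    · subst hki
      simp only [util, transfer, Function.update_self]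
      omega
    · by_cases hkj : k = j
      · subst hkj
        simp only [util, transfer, Function.update_of_ne hki, Function.update_self]
        omega
      · simp [util, transfer, hki, hkj]
  · simp only [util, transfer, Function.update_self]
    omega
end

section
/- Let f_1,…,f_n be additive dichotomous valuations on a finite item set M (so f_i(S) = |S ∩ D_i| for demand sets D_i ⊆ M) and let A be a Lorenz dominating allocation. Then A is maximin fair: for every agent i, f_i(A_i) is at least the maximin share of agent i. -/
open Finset
open scoped Classical

variable {n : ℕ} {I : Type*} [DecidableEq I] [Fintype I]

/-- If the entries of `u` indexed by `T` are at most all other entries, then the `#T` smallest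
entries of `u` sum to `∑ i ∈ T, u i`. -/
theorem sum_take_sortedVec {n : ℕ} (u : Fin n → ℕ) (T : Finset (Fin n))
    (hT : ∀ s ∈ T, ∀ t ∉ T, u s ≤ u t) :
    ((sortedVec u).take T.card).sum = ∑ i ∈ T, u i := by
  have hsplit : sortedVec u =
      (T.val.map u).sort (· ≤ ·) ++ (Tᶜ.val.map u).sort (· ≤ ·) := by
    refine List.Perm.eq_of_pairwise (le := (· ≤ ·)) (fun a b _ _ => le_antisymm)
      (Multiset.pairwise_sort _ _) ?_ ?_
    · rw [List.pairwise_append]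
      refine ⟨Multiset.pairwise_sort _ _, Multiset.pairwise_sort _ _, ?_⟩
      intro a ha b hb
      simp only [Multiset.mem_sort, Multiset.mem_map, Finset.mem_val, Finset.mem_compl] at ha hb
      obtain ⟨s, hs, rfl⟩ := ha
      obtain ⟨t, ht, rfl⟩ := hb
      exact hT s hs t ht
    · rw [← Multiset.coe_eq_coe, ← Multiset.coe_add]
      simp only [sortedVec, Multiset.sort_eq]
      rw [← Multiset.map_add, ← Finset.union_compl T,
        ← Finset.disjUnion_eq_union T Tᶜ disjoint_compl_right, Finset.disjUnion_val]
  have hlen : T.card = ((T.val.map u).sort (· ≤ ·)).length := by simp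
  rw [hsplit, hlen, List.take_left, ← Multiset.sum_coe, Multiset.sort_eq]
  rfl

/-- If every part of a partition is worth more than `#(A i ∩ D i)` to agent `i`, then agent `i`
demands an item that no agent of utility at most `#(A i ∩ D i) + 1` receives and demands. -/
theorem exists_transferable_item {n : ℕ} {I : Type*} [DecidableEq I] [Fintype I]
    (D A P : Fin n → Finset I) (hP : IsPartition P) (i : Fin n)
    (h : ∀ j, (A i ∩ D i).card < (P j ∩ D i).card) :
    ∃ e ∈ D i, ∀ l, e ∈ A l ∩ D l → (A i ∩ D i).card + 2 ≤ (A l ∩ D l).card := by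
  by_contra! hcon
  have hlow : n * ((A i ∩ D i).card + 1) ≤ (D i).card := by
    calc n * ((A i ∩ D i).card + 1) = ∑ _j : Fin n, ((A i ∩ D i).card + 1) := by simp
      _ ≤ ∑ j, (P j ∩ D i).card := Finset.sum_le_sum fun j _ => h j
      _ = (Finset.univ.biUnion fun j => P j ∩ D i).card :=
        (Finset.card_biUnion fun j _ l _ hjl =>
          (hP.1 j l hjl).mono Finset.inter_subset_left Finset.inter_subset_left).symm
      _ ≤ (D i).card := Finset.card_le_card
        (Finset.biUnion_subset.2 fun j _ => Finset.inter_subset_right)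
  have hup : (D i).card < n * ((A i ∩ D i).card + 1) := by
    calc (D i).card
        ≤ (Finset.univ.biUnion fun l =>
            if (A l ∩ D l).card < (A i ∩ D i).card + 2 then A l ∩ D l else ∅).card := by
          refine Finset.card_le_card fun e he => ?_
          obtain ⟨l, hl, hlt⟩ := hcon e he
          rw [Finset.mem_biUnion]
          exact ⟨l, Finset.mem_univ l, by rwa [if_pos hlt]⟩
      _ ≤ ∑ l, (if (A l ∩ D l).card < (A i ∩ D i).card + 2 then A l ∩ D l else ∅).card :=
        Finset.card_biUnion_le
      _ < ∑ _l : Fin n, ((A i ∩ D i).card + 1) := by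
          refine Finset.sum_lt_sum (fun l _ => ?_) ⟨i, Finset.mem_univ i, by simp⟩
          split_ifs with hl
          · omega
          · simp
      _ = n * ((A i ∩ D i).card + 1) := by simp
  omega

/-- A Lorenz dominating allocation for additive dichotomous valuations
(given by demand sets `D i`, so `f i S = |S ∩ D i|`) is maximin fair. -/
theorem lorenz_dominating_additive_dichotomous_is_maximin_fair
    {n : ℕ} {I : Type*} [DecidableEq I] [Fintype I]
    (D : Fin n → Finset I)
    (f : Fin n → Finset I → ℕ) (hf : ∀ i S, f i S = (S ∩ D i).card)
    (A : Fin n → Finset I) (hA : IsAllocation A)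
    (hLD : LorenzDominating f A) :
    ∀ i : Fin n, ∀ P : Fin n → Finset I, IsPartition P →
      ∃ j : Fin n, f i (P j) ≤ f i (A i) := by
  intro i P hP
  by_contra! hcon
  simp only [hf] at hcon
  obtain ⟨e, heD, he⟩ := exists_transferable_item D A P hP i hcon
  set u := (A i ∩ D i).card with hu
  have heA : e ∉ A i := fun h => by
    have := he i (Finset.mem_inter.2 ⟨h, heD⟩)
    omega
  set B : Fin n → Finset I := fun l => if l = i then insert e (A i) else (A l).erase e with hB
  have hBalloc : IsAllocation B := by
    intro j l hjl
    have := hA j l hjl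
    rw [Finset.disjoint_left] at this ⊢
    intro x
    simp only [hB]
    split_ifs <;> grind
  have hBi : (B i ∩ D i).card = u + 1 := by
    simp only [hB, if_true]
    rw [Finset.insert_inter_of_mem heD, Finset.card_insert_of_notMem (by simp [heA])]
  have hBne : ∀ l, l ≠ i → B l ∩ D l = (A l ∩ D l).erase e := fun l hl => by
    simp only [hB, if_neg hl, Finset.erase_inter]
  set T : Finset (Fin n) := {l | (A l ∩ D l).card ≤ u} with hTdef
  have hmem : ∀ l, l ∈ T ↔ (A l ∩ D l).card ≤ u := by simp [hTdef]
  have hBT : ∀ l ∈ T, l ≠ i → (B l ∩ D l).card = (A l ∩ D l).card := by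
    intro l hl hli
    rw [hBne l hli, Finset.erase_eq_of_notMem]
    intro hel
    have := he l hel
    have := (hmem l).1 hl
    omega
  have hiT : i ∈ T := (hmem i).2 hu.ge
  have hBle : ∀ l ∈ T, (B l ∩ D l).card ≤ u + 1 := by
    intro l hl
    by_cases hli : l = i
    · rw [hli, hBi]
    · rw [hBT l hl hli]
      exact ((hmem l).1 hl).trans (Nat.le_succ u)
  have hBge : ∀ l ∉ T, u + 1 ≤ (B l ∩ D l).card := by
    intro l hl
    rw [hBne l fun h => hl (h ▸ hiT)]
    by_cases hel : e ∈ A l ∩ D l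
    · have := he l hel
      rw [Finset.card_erase_of_mem hel]
      omega
    · rw [Finset.erase_eq_of_notMem hel]
      have := (hmem l).not.1 hl
      omega
  have hdom := hLD B hBalloc T.card
  rw [sum_take_sortedVec (util f B) T, sum_take_sortedVec (util f A) T] at hdom
  · refine hdom.not_gt (Finset.sum_lt_sum (fun l hl => ?_) ⟨i, hiT, ?_⟩)
    · simp only [util, hf]
      by_cases hli : l = i
      · rw [hli, hBi]
        omega
      · exact (hBT l hl hli).ge
    · simp only [util, hf, hBi]
      omega
  · intro s hs t ht
    have := (hmem s).1 hs
    have := (hmem t).not.1 ht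
    simp only [util, hf]
    omega
  · intro s hs t ht
    simp only [util, hf]
    exact (hBle s hs).trans (hBge t ht)
end

section
/- Let f_1,…,f_n be MRF (submodular dichotomous) valuations on a finite item set M, and let A and B be two non-redundant allocations, extended by setting A_0 = M \ (A_1 ∪ … ∪ A_n) and B_0 = M \ (B_1 ∪ … ∪ B_n). Let S⁺ = { j ∈ {0,1,…,n} : |A_j| > |B_j| } and S⁻ = { j ∈ {0,1,…,n} : |A_j| < |B_j| }. Suppose some agent i ∈ {1,…,n} satisfies i ∈ S⁻. Then there exists a non-redundant allocation C (extended by C_0 = M \ (C_1 ∪ … ∪ C_n)) such that: |C_i| = |A_i| + 1; there is exactly one index k ∈ S⁺ with |C_k| = |A_k| − 1; |C_j| = |A_j| for every j ∉ {i,k}; and C_j ⊆ A_j for every j ∈ S⁺, with C_j = A_j unless j = k. -/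
open Finset
open scoped Classical

variable {n : ℕ} {I : Type*} [DecidableEq I] [Fintype I]

/-- The value of a set under a matroid rank function is at most its size. -/
lemma IsMRF.le_card_s6 {α : Type*} [DecidableEq α] {f : Finset α → ℕ}
    (hf : IsMRF f) (S : Finset α) : f S ≤ #S := by
  induction S using Finset.induction_on with
  | empty => simp [hf.empty]
  | insert a S ha ih =>
    rw [Finset.card_insert_of_notMem ha]
    rcases hf.dichot S a with h | h <;> omega

lemma IsMRF.le_union_s6 {α : Type*} [DecidableEq α] {f : Finset α → ℕ}
    (hf : IsMRF f) (S T : Finset α) : f T ≤ f (S ∪ T) := by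
  induction S using Finset.induction_on with
  | empty => simp
  | insert a S ha ih =>
    rw [Finset.insert_union]
    rcases hf.dichot (S ∪ T) a with h | h <;> omega

/-- Every subset of a non-redundant set is independent. -/
lemma IsMRF.eq_card_of_subset {α : Type*} [DecidableEq α] {f : Finset α → ℕ}
    (hf : IsMRF f) {S T : Finset α}
    (hS : ∀ a ∈ S, f (S.erase a) < f S) (hT : T ⊆ S) : f T = #T := by
  induction T using Finset.induction_on with
  | empty => simp [hf.empty]
  | insert a T ha ih =>
    obtain ⟨haS, hTS⟩ := Finset.insert_subset_iff.mp hT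
    have hsub := hf.submod T (S.erase a) (Finset.subset_erase.mpr ⟨hTS, ha⟩) a
    rw [Finset.insert_erase haS] at hsub
    have hlt := hS a haS
    have hle := hf.le_card_s6 (insert a T)
    have hTc := ih hTS
    rw [Finset.card_insert_of_notMem ha] at hle ⊢
    omega

lemma IsMRF.erase_lt_of_eq_card {α : Type*} [DecidableEq α] {f : Finset α → ℕ}
    (hf : IsMRF f) {S : Finset α}
    (hS : f S = #S) {a : α} (ha : a ∈ S) : f (S.erase a) < f S := by
  have hle := hf.le_card_s6 (S.erase a)
  have hcard := Finset.card_erase_add_one ha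
  omega

/-- Augmentation: an independent set can be extended by an element of any larger one. -/
lemma IsMRF.exists_insert_eq_card {α : Type*} [DecidableEq α] {f : Finset α → ℕ}
    (hf : IsMRF f) {S T : Finset α}
    (hS : f S = #S) (hT : f T = #T) (hlt : #S < #T) :
    ∃ b ∈ T, b ∉ S ∧ f (insert b S) = #(insert b S) := by
  by_contra! hno
  have hstay : ∀ b ∈ T, f (insert b S) = f S := by
    intro b hb
    by_cases hbS : b ∈ S
    · rw [Finset.insert_eq_of_mem hbS]
    · have hne := hno b hb hbS
      rw [Finset.card_insert_of_notMem hbS] at hne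
      rcases hf.dichot S b with h | h <;> omega
  have hspan : ∀ U ⊆ T, f (U ∪ S) ≤ f S := by
    intro U
    induction U using Finset.induction_on with
    | empty => simp
    | insert b U hb ih =>
      intro hU
      obtain ⟨hbT, hUT⟩ := Finset.insert_subset_iff.mp hU
      have hsub := hf.submod S (U ∪ S) Finset.subset_union_right b
      rw [hstay b hbT] at hsub
      rw [Finset.insert_union]
      have hU' := ih hUT
      omega
  have hTS := hspan T subset_rfl
  have hle := hf.le_union_s6 S T
  rw [Finset.union_comm] at hle
  omega

/-- The set of items that the assignment `g` gives to index `j`. -/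
noncomputable def bundle {ι : Type*} (g : I → ι) (j : ι) : Finset I := {x | g x = j}

lemma bundle_update_self {ι : Type*} (g : I → ι) (b : I) (i : ι) :
    bundle (Function.update g b i) i = insert b (bundle g i) := by
  ext x
  by_cases hx : x = b <;> simp [bundle, Function.update_apply, hx]

lemma bundle_update_of_ne {ι : Type*} (g : I → ι) (b : I) {i j : ι} (hj : j ≠ i) :
    bundle (Function.update g b i) j = (bundle g j).erase b := by
  ext x
  by_cases hx : x = b <;> simp [bundle, Function.update_apply, hx, hj.symm]

/-- The exchange lemma for assignments of all items to indices carrying independence systems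
with the augmentation property. -/
lemma exists_exchange_assignment {ι : Type*} (Ind : ι → Finset I → Prop)
    (hmono : ∀ j S T, T ⊆ S → Ind j S → Ind j T)
    (haug : ∀ j S T, Ind j S → Ind j T → #S < #T → ∃ b ∈ T, b ∉ S ∧ Ind j (insert b S))
    (h : I → ι) (hh : ∀ j, Ind j (bundle h j)) (g : I → ι) (hg : ∀ j, Ind j (bundle g j))
    (i : ι) (hi : #(bundle g i) < #(bundle h i)) :
    ∃ (c : I → ι) (k : ι), (∀ j, Ind j (bundle c j)) ∧
      #(bundle c i) = #(bundle g i) + 1 ∧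
      #(bundle h k) < #(bundle g k) ∧
      #(bundle c k) + 1 = #(bundle g k) ∧
      (∀ j, j ≠ i → j ≠ k → #(bundle c j) = #(bundle g j)) ∧
      (∀ j, #(bundle h j) < #(bundle g j) → bundle c j ⊆ bundle g j) ∧
      (∀ j, #(bundle h j) < #(bundle g j) → j ≠ k → bundle c j = bundle g j) := by
  induction hm : #{x | g x ≠ h x} using Nat.strong_induction_on generalizing g i with
  | _ m ih =>
    obtain ⟨b, hbh, hbg, hins⟩ := haug i _ _ (hg i) (hh i) hi
    have hbi : h b = i := by simpa [bundle] using hbh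
    have hgi : g b ≠ i := by simpa [bundle] using hbg
    set g' := Function.update g b i with hg'
    have hself : bundle g' i = insert b (bundle g i) := bundle_update_self g b i
    have herase : ∀ j, j ≠ i → bundle g' j = (bundle g j).erase b :=
      fun j hj => bundle_update_of_ne g b hj
    have hother : ∀ j, j ≠ i → j ≠ g b → bundle g' j = bundle g j := by
      intro j hj hjb
      rw [herase j hj, Finset.erase_eq_of_notMem]
      simpa [bundle] using hjb.symm
    have hcardi : #(bundle g' i) = #(bundle g i) + 1 := by
      rw [hself, Finset.card_insert_of_notMem hbg]
    have hcardb : #(bundle g' (g b)) + 1 = #(bundle g (g b)) := by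
      rw [herase _ hgi]
      exact Finset.card_erase_add_one (by simp [bundle])
    have hind : ∀ j, Ind j (bundle g' j) := by
      intro j
      by_cases hj : j = i
      · subst hj
        rw [hself]
        exact hins
      · rw [herase j hj]
        exact hmono j _ _ (Finset.erase_subset _ _) (hg j)
    by_cases hplus : #(bundle h (g b)) < #(bundle g (g b))
    · refine ⟨g', g b, hind, hcardi, hplus, hcardb, fun j hj hjb => by rw [hother j hj hjb],
        fun j hjp => ?_, fun j hjp hjb => hother j ?_ hjb⟩
      · rw [herase j (by rintro rfl; omega)]
        exact Finset.erase_subset _ _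
      · rintro rfl
        omega
    · have hdist : #{x | g' x ≠ h x} < m := by
        rw [← hm]
        refine Finset.card_lt_card (Finset.ssubset_iff_of_subset ?_ |>.mpr ⟨b, ?_, ?_⟩)
        · intro x
          by_cases hx : x = b <;> simp [hg', Function.update_apply, hx, hbi]
        · simpa [hbi] using hgi
        · simp [hg', hbi]
      obtain ⟨c, k, hc, hcb, hkp, hck, hcj, hcsub, hceq⟩ :=
        ih _ hdist g' hind (g b) (by omega) rfl
      have hki : k ≠ i := by rintro rfl; omega
      have hkb : k ≠ g b := by rintro rfl; omega
      have hkg := hother k hki hkb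
      have hSplus : ∀ j, #(bundle h j) < #(bundle g j) → bundle g' j = bundle g j :=
        fun j hj => hother j (by rintro rfl; omega) (by rintro rfl; omega)
      refine ⟨c, k, hc, ?_, hkg ▸ hkp, hkg ▸ hck, ?_, ?_, ?_⟩
      · rw [hcj i hgi.symm hki.symm, hcardi]
      · intro j hj hjk
        by_cases hjb : j = g b
        · subst hjb
          omega
        · rw [hcj j hjb hjk, hother j hj hjb]
      · intro j hj
        have hgj := hSplus j hj
        rw [← hgj]
        exact hcsub j (hgj.symm ▸ hj)
      · intro j hj hjk
        have hgj := hSplus j hj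
        rw [← hgj]
        exact hceq j (hgj.symm ▸ hj) hjk

/-- Every allocation is induced by an assignment of all items to `Option (Fin n)`. -/
lemma IsAllocation.exists_bundle_eq {A : Fin n → Finset I} (hA : IsAllocation A) :
    ∃ g : I → Option (Fin n), ∀ j, bundle g j = extAlloc A j := by
  have hex : ∀ x : I, ∃ j, x ∈ extAlloc A j := by
    intro x
    by_cases hx : ∃ j, x ∈ A j
    · obtain ⟨j, hj⟩ := hx
      exact ⟨some j, hj⟩
    · exact ⟨none, by simpa [extAlloc] using hx⟩
  have huniq : ∀ (x : I) (j k : Option (Fin n)),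
      x ∈ extAlloc A j → x ∈ extAlloc A k → j = k := by
    rintro x (_ | j) (_ | k) hj hk
    · rfl
    · simp only [extAlloc, mem_sdiff, mem_biUnion, mem_univ, true_and, not_exists] at hj hk
      exact absurd hk (hj k)
    · simp only [extAlloc, mem_sdiff, mem_biUnion, mem_univ, true_and, not_exists] at hj hk
      exact absurd hj (hk j)
    · by_contra hjk
      exact Finset.disjoint_left.mp (hA j k fun h => hjk (congrArg some h)) hj hk
  choose g hg using hex
  refine ⟨g, fun j => ?_⟩
  ext x
  simp only [bundle, mem_filter, mem_univ, true_and]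
  exact ⟨fun h => h ▸ hg x, fun h => huniq x _ _ (hg x) h⟩

lemma isAllocation_bundle_some {α : Type*} [Fintype α] (c : α → Option (Fin n)) :
    IsAllocation fun j => bundle c (some j) := by
  intro j k hjk
  rw [Finset.disjoint_left]
  intro x hj hk
  simp only [bundle, mem_filter, mem_univ, true_and] at hj hk
  exact hjk (Option.some.inj (hj.symm.trans hk))

lemma extAlloc_bundle_some (c : I → Option (Fin n)) (j : Option (Fin n)) :
    extAlloc (fun j => bundle c (some j)) j = bundle c j := by
  cases j with
  | none =>
    ext x
    simp [extAlloc, bundle, Option.eq_none_iff_forall_ne_some]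
  | some j => rfl

/-- Independence for the extended allocation: any set may be left unallocated. -/
def extInd (f : Fin n → Finset I → ℕ) : Option (Fin n) → Finset I → Prop
  | none, _ => True
  | some j, S => f j S = #S

lemma NonRedundant.extInd {f : Fin n → Finset I → ℕ} (hf : ∀ i, IsMRF (f i))
    {A : Fin n → Finset I} (hA : NonRedundant f A) (j : Option (Fin n)) :
    extInd f j (extAlloc A j) := by
  cases j with
  | none => trivial
  | some j => exact (hf j).eq_card_of_subset (hA j) subset_rfl

/-- The exchange lemma: if agent `i` holds fewer items under `A` than under `B`
(both non-redundant allocations for MRF valuations), then `A` can be modified into a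
non-redundant allocation `C` in which `i` gains one item, exactly one index of
`S⁺ = {j : |A_j| > |B_j|}` loses one item, and all other bundle sizes are preserved;
moreover the bundles of indices in `S⁺` only shrink (staying equal except at `k`). -/
theorem exchange_graph_lemma
    {n : ℕ} {I : Type*} [DecidableEq I] [Fintype I]
    (f : Fin n → Finset I → ℕ) (hf : ∀ i, IsMRF (f i))
    (A B : Fin n → Finset I)
    (hA : IsAllocation A) (hB : IsAllocation B)
    (hNA : NonRedundant f A) (hNB : NonRedundant f B)
    (i : Fin n) (hi : (A i).card < (B i).card) :
    ∃ C : Fin n → Finset I, IsAllocation C ∧ NonRedundant f C ∧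
      (C i).card = (A i).card + 1 ∧
      ∃ k : Option (Fin n),
        -- `k ∈ S⁺`
        (extAlloc B k).card < (extAlloc A k).card ∧
        -- `|C_k| = |A_k| − 1`
        (extAlloc C k).card + 1 = (extAlloc A k).card ∧
        -- uniqueness of such an index in `S⁺`
        (∀ k' : Option (Fin n), (extAlloc B k').card < (extAlloc A k').card →
          (extAlloc C k').card + 1 = (extAlloc A k').card → k' = k) ∧
        -- all indices other than `i` and `k` keep their size
        (∀ j : Option (Fin n), j ≠ some i → j ≠ k →
          (extAlloc C j).card = (extAlloc A j).card) ∧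
        -- indices of `S⁺` only shrink, with equality unless `j = k`
        (∀ j : Option (Fin n), (extAlloc B j).card < (extAlloc A j).card →
          extAlloc C j ⊆ extAlloc A j) ∧
        (∀ j : Option (Fin n), (extAlloc B j).card < (extAlloc A j).card → j ≠ k →
          extAlloc C j = extAlloc A j) := by
  obtain ⟨g, hg⟩ := hA.exists_bundle_eq
  obtain ⟨h, hh⟩ := hB.exists_bundle_eq
  obtain ⟨c, k, hc, hci, hkp, hck, hcj, hcsub, hceq⟩ :=
    exists_exchange_assignment (extInd f)
      (by
        rintro (_ | j) S T hTS hS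
        · trivial
        · exact (hf j).eq_card_of_subset (fun a ha => (hf j).erase_lt_of_eq_card hS ha) hTS)
      (by
        rintro (_ | j) S T hS hT hlt
        · obtain ⟨b, hbT, hbS⟩ := Finset.exists_mem_notMem_of_card_lt_card hlt
          exact ⟨b, hbT, hbS, trivial⟩
        · exact (hf j).exists_insert_eq_card hS hT hlt)
      h (fun j => hh j ▸ hNB.extInd hf j) g (fun j => hg j ▸ hNA.extInd hf j)
      (some i) (by rw [hg, hh]; exact hi)
  simp only [hg, hh] at hci hkp hck hcj hcsub hceq
  refine ⟨fun j => bundle c (some j), isAllocation_bundle_some c,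
    fun j a ha => (hf j).erase_lt_of_eq_card (hc (some j)) ha, hci, k, ?_⟩
  simp only [extAlloc_bundle_some]
  refine ⟨hkp, hck, fun k' hk' hcard => ?_, hcj, hcsub, hceq⟩
  by_contra hne
  rw [hceq k' hk' hne] at hcard
  omega
end

section
/- Let f_1,…,f_n be MRF (submodular dichotomous) valuations on a finite item set M, and define the welfare function W on sets of agents by W(S) = max over allocations A of Σ_{i∈S} f_i(A_i). Then W is submodular: for every set S of agents and every two distinct agents u, v ∉ S, W(S ∪ {u}) + W(S ∪ {v}) ≥ W(S) + W(S ∪ {u,v}). -/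
open Finset
open scoped Classical

variable {n : ℕ} {I : Type*} [DecidableEq I] [Fintype I]

namespace IsMRF

variable {f : Finset I → ℕ}

theorem mono (hf : IsMRF f) {S T : Finset I} (h : S ⊆ T) : f S ≤ f T := by
  have key : ∀ U : Finset I, f S ≤ f (U ∪ S) := by
    intro U
    induction U using Finset.induction_on with
    | empty => simp
    | insert a U _ ih =>
      rw [insert_union]
      rcases hf.dichot (U ∪ S) a with h | h <;> omega
  simpa [union_eq_left.mpr h] using key T

theorem union_add_le (hf : IsMRF f) {S T : Finset I} (h : S ⊆ T) (U : Finset I) :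
    f (U ∪ T) + f S ≤ f (U ∪ S) + f T := by
  induction U using Finset.induction_on with
  | empty => simp [add_comm]
  | insert a U _ ih =>
    have := hf.submod (U ∪ S) (U ∪ T) (union_subset_union_right h) a
    rw [insert_union, insert_union]
    omega

theorem union_add_inter_le (hf : IsMRF f) (S T : Finset I) :
    f (S ∪ T) + f (S ∩ T) ≤ f S + f T := by
  have := hf.union_add_le (inter_subset_right : S ∩ T ⊆ T) S
  rwa [union_eq_left.mpr (inter_subset_left : S ∩ T ⊆ S)] at this

theorem union_le_add_card (hf : IsMRF f) (S U : Finset I) : f (U ∪ S) ≤ f S + #U := by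
  induction U using Finset.induction_on with
  | empty => simp
  | insert a U ha ih =>
    rw [insert_union, card_insert_of_notMem ha]
    rcases hf.dichot (U ∪ S) a with h | h <;> omega

end IsMRF

/-- The covering bound by the item set `T` when agent `i` may only receive items of `A i`. -/
def coverBound (f : Fin n → Finset I → ℕ) (S : Finset (Fin n)) (A : Fin n → Finset I)
    (T : Finset I) : ℕ :=
  ∑ k ∈ S, f k (A k ∩ T) + #Tᶜ

theorem maxWelfare_le_coverBound {f : Fin n → Finset I → ℕ} (hf : ∀ i, IsMRF (f i))
    (S : Finset (Fin n)) (T : Finset I) :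
    maxWelfare f S ≤ coverBound f S (fun _ => univ) T := by
  refine Finset.sup_le fun B hB => ?_
  have hB : IsAllocation B := (mem_filter.mp hB).2
  have hle : ∀ k ∈ S, f k (B k) ≤ f k T + #(B k \ T) := fun k _ =>
    ((hf k).mono (by simp)).trans ((hf k).union_le_add_card T (B k \ T))
  have hcard : ∑ k ∈ S, #(B k \ T) ≤ #Tᶜ := by
    rw [← card_biUnion fun i _ j _ hij => (hB i j hij).mono sdiff_subset sdiff_subset]
    refine card_le_card fun a ha => ?_
    simp only [mem_biUnion, mem_sdiff] at ha
    obtain ⟨_, _, _, h⟩ := ha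
    simpa using h
  have := sum_le_sum hle
  rw [sum_add_distrib] at this
  simp only [coverBound, univ_inter]
  omega

/-- Two bounds obtained by withdrawing `x` from two different agents can be uncrossed. -/
theorem coverBound_uncross {f : Fin n → Finset I → ℕ} (hf : ∀ i, IsMRF (f i))
    (S : Finset (Fin n)) (A : Fin n → Finset I) {i j : Fin n} (hij : i ≠ j) {x : I}
    {T₁ T₂ : Finset I} (h₁ : x ∈ T₁) (h₂ : x ∈ T₂) :
    coverBound f S A (T₁ ∪ T₂) + coverBound f S A ((T₁ ∩ T₂).erase x) ≤
      coverBound f S (Function.update A i ((A i).erase x)) T₁ +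
        coverBound f S (Function.update A j ((A j).erase x)) T₂ + 1 := by
  have hterm : ∀ k ∈ S, f k (A k ∩ (T₁ ∪ T₂)) + f k (A k ∩ (T₁ ∩ T₂).erase x) ≤
      f k (Function.update A i ((A i).erase x) k ∩ T₁) +
        f k (Function.update A j ((A j).erase x) k ∩ T₂) := by
    intro k _
    refine le_trans (add_le_add ((hf k).mono ?_) ((hf k).mono ?_))
      ((hf k).union_add_inter_le _ _)
    · intro a ha
      simp only [Function.update_apply]
      grind
    · intro a ha
      simp only [Function.update_apply]
      grind
  have hsum := sum_le_sum hterm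
  rw [sum_add_distrib, sum_add_distrib] at hsum
  have hx : x ∈ T₁ ∩ T₂ := mem_inter.mpr ⟨h₁, h₂⟩
  have hc := card_union_add_card_inter T₁ T₂
  have he := card_erase_add_one hx
  have e₁ := card_add_card_compl T₁
  have e₂ := card_add_card_compl T₂
  have e₃ := card_add_card_compl (T₁ ∪ T₂)
  have e₄ := card_add_card_compl ((T₁ ∩ T₂).erase x)
  simp only [coverBound]
  omega

theorem coverBound_update_erase_of_notMem (f : Fin n → Finset I → ℕ) (S : Finset (Fin n))
    (A : Fin n → Finset I) (i : Fin n) {x : I} {T : Finset I} (hx : x ∉ T) :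
    coverBound f S (Function.update A i ((A i).erase x)) T = coverBound f S A T := by
  have : ∀ k, Function.update A i ((A i).erase x) k ∩ T = A k ∩ T := by
    intro k
    ext a
    simp only [Function.update_apply]
    grind
  simp only [coverBound, this]

theorem sum_card_update_erase_lt (A : Fin n → Finset I) {i : Fin n} {x : I} (hx : x ∈ A i) :
    ∑ k, #(Function.update A i ((A i).erase x) k) < ∑ k, #(A k) := by
  refine sum_lt_sum (fun k _ => card_le_card ?_) ⟨i, mem_univ i, ?_⟩
  · intro a
    simp only [Function.update_apply]
    grind
  · simpa using card_erase_lt_of_mem hx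

theorem le_maxWelfare_of_le_coverBound {f : Fin n → Finset I → ℕ} (hf : ∀ i, IsMRF (f i))
    (S : Finset (Fin n)) (d : ℕ) (A : Fin n → Finset I) (hA : ∀ T, d ≤ coverBound f S A T) :
    d ≤ maxWelfare f S := by
  induction hm : ∑ k, #(A k) using Nat.strong_induction_on generalizing A with
  | _ m ih =>
    by_cases hall : IsAllocation A
    · refine (hA univ).trans ?_
      simp only [coverBound, inter_univ, compl_univ, card_empty, add_zero]
      exact Finset.le_sup (f := fun B : Fin n → Finset I => ∑ j ∈ S, f j (B j))
        (mem_filter.mpr ⟨mem_univ A, hall⟩)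
    · simp only [IsAllocation, not_forall, not_disjoint_iff] at hall
      obtain ⟨i, j, hij, x, hi, hj⟩ := hall
      by_cases H₁ : ∀ T, d ≤ coverBound f S (Function.update A i ((A i).erase x)) T
      · exact ih _ (hm ▸ sum_card_update_erase_lt A hi) _ H₁ rfl
      by_cases H₂ : ∀ T, d ≤ coverBound f S (Function.update A j ((A j).erase x)) T
      · exact ih _ (hm ▸ sum_card_update_erase_lt A hj) _ H₂ rfl
      push Not at H₁ H₂
      obtain ⟨T₁, hT₁⟩ := H₁
      obtain ⟨T₂, hT₂⟩ := H₂
      have m₁ : x ∈ T₁ := by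
        by_contra h
        rw [coverBound_update_erase_of_notMem f S A i h] at hT₁
        exact (hA T₁).not_gt hT₁
      have m₂ : x ∈ T₂ := by
        by_contra h
        rw [coverBound_update_erase_of_notMem f S A j h] at hT₂
        exact (hA T₂).not_gt hT₂
      have := coverBound_uncross hf S A hij m₁ m₂
      have := hA (T₁ ∪ T₂)
      have := hA ((T₁ ∩ T₂).erase x)
      omega

theorem exists_coverBound_le_maxWelfare {f : Fin n → Finset I → ℕ} (hf : ∀ i, IsMRF (f i))
    (S : Finset (Fin n)) :
    ∃ T, coverBound f S (fun _ => univ) T ≤ maxWelfare f S := by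
  by_contra! h
  exact (le_maxWelfare_of_le_coverBound hf S (maxWelfare f S + 1) _ h).not_gt
    (Nat.lt_succ_self _)

/-- The welfare function induced by MRF valuations is submodular. -/
theorem maxWelfare_submodular
    {n : ℕ} {I : Type*} [DecidableEq I] [Fintype I]
    (f : Fin n → Finset I → ℕ) (hf : ∀ i, IsMRF (f i))
    (S : Finset (Fin n)) (u v : Fin n)
    (hu : u ∉ S) (hv : v ∉ S) (huv : u ≠ v) :
    maxWelfare f S + maxWelfare f (insert u (insert v S))
      ≤ maxWelfare f (insert u S) + maxWelfare f (insert v S) := by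
  obtain ⟨T₁, h₁⟩ := exists_coverBound_le_maxWelfare hf (insert u S)
  obtain ⟨T₂, h₂⟩ := exists_coverBound_le_maxWelfare hf (insert v S)
  have h₃ := maxWelfare_le_coverBound hf S (T₁ ∪ T₂)
  have h₄ := maxWelfare_le_coverBound hf (insert u (insert v S)) (T₁ ∩ T₂)
  have huvS : u ∉ insert v S := by simp [huv, hu]
  simp only [coverBound, univ_inter, sum_insert hu, sum_insert hv, sum_insert huvS]
    at h₁ h₂ h₃ h₄
  have hsum := sum_le_sum fun k (_ : k ∈ S) => (hf k).union_add_inter_le T₁ T₂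
  rw [sum_add_distrib, sum_add_distrib] at hsum
  have hmu := (hf u).mono (inter_subset_left : T₁ ∩ T₂ ⊆ T₁)
  have hmv := (hf v).mono (inter_subset_right : T₁ ∩ T₂ ⊆ T₂)
  have hc := card_union_add_card_inter T₁ T₂
  have e₁ := card_add_card_compl T₁
  have e₂ := card_add_card_compl T₂
  have e₃ := card_add_card_compl (T₁ ∪ T₂)
  have e₄ := card_add_card_compl (T₁ ∩ T₂)
  omega
end
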